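/- arXiv:2605.02349 — 2 statements merged into one kernel-verified Lean document; each statement's English description precedes it below -/
import Mathlib

section
/- Let ε ∈ (0,1), let z₁, z₂ be self-adjoint bounded operators on a complex Hilbert space H with z₁ ≥ −ε·1 and z₂ ≥ −ε·1, let η₁, η₂ ∈ H and α ∈ (0,1). Then ⟨α η₁ + (1−α) η₂, (1 + α z₁ + (1−α) z₂)^{-1} (α η₁ + (1−α) η₂)⟩ ≤ α ⟨η₁, (1 + z₁)^{-1} η₁⟩ + (1−α) ⟨η₂, (1 + z₂)^{-1} η₂⟩; that is, the map (z, η) ↦ ⟨η, (1+z)^{-1} η⟩ is jointly convex on {z self-adjoint bounded : z ≥ −ε·1} × H. -/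
set_option synthInstance.maxHeartbeats 1000000
set_option maxHeartbeats 1000000

open scoped InnerProductSpace

section TraceSetup

variable (H : Type*) [NormedAddCommGroup H] [InnerProductSpace ℂ H] [CompleteSpace H]

/-- A fixed Hilbert basis of `H`, used to define the trace. -/
noncomputable def traceBasis : HilbertBasis (exists_hilbertBasis ℂ H).choose ℂ H :=
  (exists_hilbertBasis ℂ H).choose_spec.choose

variable {H}

/-- The diagonal of an operator with respect to the chosen Hilbert basis. -/
noncomputable def opDiag (A : H →L[ℂ] H) (i : (exists_hilbertBasis ℂ H).choose) : ℝ :=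
  (⟪traceBasis H i, A (traceBasis H i)⟫_ℂ).re

/-- The trace of an operator: the sum of its diagonal with respect to the chosen Hilbert
basis.  For a trace-class operator this agrees with the usual trace. -/
noncomputable def opTrace (A : H →L[ℂ] H) : ℝ := ∑' i, opDiag A i

/-- An operator is a positive trace-class operator iff it is positive (for the Loewner order,
i.e. self-adjoint with nonnegative quadratic form) and its diagonal is summable. -/
def IsPosTraceClass (A : H →L[ℂ] H) : Prop := 0 ≤ A ∧ Summable (opDiag A)

/-- `A` is Hilbert–Schmidt iff `A* A` has finite trace. -/
def IsHilbertSchmidt (A : H →L[ℂ] H) : Prop := Summable (opDiag (star A * A))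

/-- The Hilbert–Schmidt norm `‖A‖_HS = (Tr[A* A])^{1/2}`. -/
noncomputable def hsNorm (A : H →L[ℂ] H) : ℝ := Real.sqrt (opTrace (star A * A))

end TraceSetup

/-!
Completing the square shows that, for a positive invertible operator `A`,
`⟨η, A⁻¹ η⟩ = max_ξ (2 Re ⟨ξ, η⟩ - ⟨ξ, A ξ⟩)`, the maximum being attained at `ξ = A⁻¹ η`. For fixed
`ξ` the right-hand side is real-linear in the pair `(A, η)`, and a maximum of linear functions is
convex.
-/

section JointConvexity

open RCLike

lemma apply_ringInverse_apply {R M : Type*} [Semiring R] [TopologicalSpace M] [AddCommMonoid M]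
    [ContinuousAdd M] [Module R M] {A : M →L[R] M} (hA : IsUnit A) (x : M) :
    A (Ring.inverse A x) = x :=
  DFunLike.congr_fun (Ring.mul_inverse_cancel A hA) x

variable {𝕜 H : Type*} [RCLike 𝕜] [NormedAddCommGroup H] [InnerProductSpace 𝕜 H]
variable [NormedSpace ℝ H] [IsScalarTower ℝ 𝕜 H]

lemma isPositive_real_smul {A : H →L[𝕜] H} (hA : A.IsPositive) {c : ℝ} (hc : 0 ≤ c) :
    (c • A).IsPositive := by
  rw [← algebraMap_smul 𝕜 c A]
  exact hA.smul_of_nonneg (ofReal_nonneg.2 hc)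

lemma convex_setOf_isPositive : Convex ℝ {A : H →L[𝕜] H | A.IsPositive} :=
  fun _ hA _ hB _ _ ha hb _ => (isPositive_real_smul hA ha).add (isPositive_real_smul hB hb)

lemma convex_Ici_loewner (B : H →L[𝕜] H) : Convex ℝ (Set.Ici B) := by
  have hpreimage : Set.Ici B = (fun A => -B + A) ⁻¹' {A | A.IsPositive} := by
    ext A
    rw [Set.mem_Ici, ContinuousLinearMap.le_def, ← neg_add_eq_sub]
    rfl
  rw [hpreimage]
  exact convex_setOf_isPositive.translate_preimage_right (-B)

lemma isPositive_of_smul_one_le {A : H →L[𝕜] H} {c : ℝ} (hc : 0 ≤ c)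
    (hA : c • (1 : H →L[𝕜] H) ≤ A) : A.IsPositive := by
  have hc_one : 0 ≤ c • (1 : H →L[𝕜] H) :=
    (ContinuousLinearMap.nonneg_iff_isPositive _).2
      (isPositive_real_smul ContinuousLinearMap.isPositive_one hc)
  exact (ContinuousLinearMap.nonneg_iff_isPositive A).1 (hc_one.trans hA)

lemma isUnit_of_smul_one_le [CompleteSpace H] {A : H →L[𝕜] H} {c : ℝ} (hc : 0 < c)
    (hA : c • (1 : H →L[𝕜] H) ≤ A) : IsUnit A := by
  refine A.isUnit_of_forall_le_norm_inner_map (c := ⟨c, hc.le⟩) hc fun x => ?_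
  have hx : 0 ≤ re ⟪A x - c • x, x⟫_𝕜 := hA.re_inner_nonneg_left x
  calc
    ‖x‖ ^ 2 * c = re ⟪c • x, x⟫_𝕜 := by
      rw [inner_smul_left_eq_smul, smul_re, inner_self_eq_norm_sq, mul_comm]
    _ ≤ re ⟪A x, x⟫_𝕜 := by rwa [inner_sub_left, map_sub, sub_nonneg] at hx
    _ ≤ ‖⟪A x, x⟫_𝕜‖ := re_le_norm _

/-- For fixed `ξ`, the functional `(A, η) ↦ 2 Re ⟨ξ, η⟩ - Re ⟨ξ, A ξ⟩` whose maximum over `ξ` is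
`⟨η, A⁻¹ η⟩` when `A` is positive and invertible. It is bundled as an `ℝ`-linear map in the pair
`(A, η)`. -/
noncomputable def innerInverseMinorant (ξ : H) : (H →L[𝕜] H) × H →ₗ[ℝ] ℝ where
  toFun p := 2 * re ⟪ξ, p.2⟫_𝕜 - re ⟪ξ, p.1 ξ⟫_𝕜
  map_add' p q := by
    simp only [Prod.fst_add, Prod.snd_add, add_apply, inner_add_right, map_add]
    ring
  map_smul' c p := by
    simp only [Prod.smul_fst, Prod.smul_snd, smul_apply, inner_smul_right_eq_smul, smul_re,
      RingHom.id_apply, smul_eq_mul]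
    ring

lemma re_inner_inverse_sub_innerInverseMinorant {A : H →L[𝕜] H} (hA : A.IsSymmetric)
    (hA_unit : IsUnit A) (η ξ : H) :
    re ⟪η, Ring.inverse A η⟫_𝕜 - innerInverseMinorant ξ (A, η) =
      re ⟪Ring.inverse A η - ξ, A (Ring.inverse A η - ξ)⟫_𝕜 := by
  have hη : A (Ring.inverse A η) = η := apply_ringInverse_apply hA_unit η
  have hcross : ⟪Ring.inverse A η, A ξ⟫_𝕜 = ⟪η, ξ⟫_𝕜 := by
    rw [← hA.apply_clm, hη]
  simp only [innerInverseMinorant, LinearMap.coe_mk, AddHom.coe_mk, map_sub, inner_sub_left,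
    inner_sub_right, hη, hcross, inner_re_symm (𝕜 := 𝕜) η]
  ring

lemma innerInverseMinorant_le {A : H →L[𝕜] H} (hA : A.IsPositive) (hA_unit : IsUnit A) (η ξ : H) :
    innerInverseMinorant ξ (A, η) ≤ re ⟪η, Ring.inverse A η⟫_𝕜 := by
  rw [← sub_nonneg, re_inner_inverse_sub_innerInverseMinorant hA.isSymmetric hA_unit]
  exact hA.re_inner_nonneg_right _

lemma innerInverseMinorant_inverse_apply {A : H →L[𝕜] H} (hA : IsUnit A) (η : H) :
    innerInverseMinorant (Ring.inverse A η) (A, η) = re ⟪η, Ring.inverse A η⟫_𝕜 := by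
  simp only [innerInverseMinorant, LinearMap.coe_mk, AddHom.coe_mk, apply_ringInverse_apply hA,
    inner_re_symm (𝕜 := 𝕜) η]
  ring

theorem convexOn_re_inner_inverse [CompleteSpace H] {c : ℝ} (hc : 0 < c) :
    ConvexOn ℝ (Set.Ici (c • (1 : H →L[𝕜] H)) ×ˢ Set.univ)
      fun p => re ⟪p.2, Ring.inverse p.1 p.2⟫_𝕜 := by
  have hconvex : Convex ℝ (Set.Ici (c • (1 : H →L[𝕜] H)) ×ˢ (Set.univ : Set H)) :=
    (convex_Ici_loewner _).prod convex_univ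
  refine ⟨hconvex, fun p hp q hq a b ha hb hab => ?_⟩
  have hle (ξ : H) {r : (H →L[𝕜] H) × H} (hr : c • (1 : H →L[𝕜] H) ≤ r.1) :
      innerInverseMinorant ξ r ≤ re ⟪r.2, Ring.inverse r.1 r.2⟫_𝕜 :=
    innerInverseMinorant_le (isPositive_of_smul_one_le hc.le hr) (isUnit_of_smul_one_le hc hr) r.2 ξ
  have hr : c • (1 : H →L[𝕜] H) ≤ (a • p + b • q).1 := (hconvex hp hq ha hb hab).1
  set r := a • p + b • q with hr_def
  set ξ := Ring.inverse r.1 r.2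
  calc
    re ⟪r.2, ξ⟫_𝕜 = innerInverseMinorant ξ r :=
      (innerInverseMinorant_inverse_apply (isUnit_of_smul_one_le hc hr) r.2).symm
    _ = a • innerInverseMinorant ξ p + b • innerInverseMinorant ξ q := by
      rw [hr_def, map_add, map_smul, map_smul]
    _ ≤ a • re ⟪p.2, Ring.inverse p.1 p.2⟫_𝕜 + b • re ⟪q.2, Ring.inverse q.1 q.2⟫_𝕜 := by
      gcongr
      · exact hle ξ hp.1
      · exact hle ξ hq.1

theorem inner_inverse_jointly_convex_general [CompleteSpace H] {ε : ℝ} (hε : ε < 1) :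
    ConvexOn ℝ (Set.Ici (-(ε • (1 : H →L[𝕜] H))) ×ˢ Set.univ)
      fun p => re ⟪p.2, Ring.inverse (1 + p.1) p.2⟫_𝕜 := by
  have hshift (z : H →L[𝕜] H) : -(ε • 1) ≤ z ↔ (1 - ε) • (1 : H →L[𝕜] H) ≤ 1 + z := by
    rw [ContinuousLinearMap.le_def, ContinuousLinearMap.le_def]
    congr! 1
    module
  have hdomain : Set.Ici (-(ε • (1 : H →L[𝕜] H))) ×ˢ (Set.univ : Set H) =
      (fun p => (1, 0) + p) ⁻¹' (Set.Ici ((1 - ε) • (1 : H →L[𝕜] H)) ×ˢ Set.univ) := by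
    ext p
    simp [hshift]
  rw [hdomain]
  exact ((convexOn_re_inner_inverse (sub_pos.2 hε)).translate_right (1, 0)).congr fun p _ => by simp

end JointConvexity

/-- Joint convexity of `(z, η) ↦ ⟨η, (1+z)⁻¹ η⟩` on
`{z self-adjoint : z ≥ −ε·1} × H` for `ε ∈ (0,1)`. -/
theorem inner_inverse_jointly_convex {H : Type*} [NormedAddCommGroup H]
    [InnerProductSpace ℂ H] [CompleteSpace H] (ε : ℝ) (hε : ε ∈ Set.Ioo (0 : ℝ) 1)
    (z₁ z₂ : H →L[ℂ] H) (hz₁ : IsSelfAdjoint z₁) (hz₂ : IsSelfAdjoint z₂)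
    (hb₁ : -(ε • (1 : H →L[ℂ] H)) ≤ z₁) (hb₂ : -(ε • (1 : H →L[ℂ] H)) ≤ z₂)
    (η₁ η₂ : H) (α : ℝ) (hα : α ∈ Set.Ioo (0 : ℝ) 1) :
    (⟪α • η₁ + (1 - α) • η₂,
        Ring.inverse (1 + α • z₁ + (1 - α) • z₂) (α • η₁ + (1 - α) • η₂)⟫_ℂ).re
      ≤ α * (⟪η₁, Ring.inverse (1 + z₁) η₁⟫_ℂ).re
        + (1 - α) * (⟪η₂, Ring.inverse (1 + z₂) η₂⟫_ℂ).re := by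
  rw [add_assoc]
  exact (inner_inverse_jointly_convex_general hε.2).2 (x := (z₁, η₁)) ⟨hb₁, trivial⟩
    (y := (z₂, η₂)) ⟨hb₂, trivial⟩ hα.1.le (sub_nonneg.2 hα.2.le) (add_sub_cancel α 1)
end

section
/- Let ε ∈ (0,1) and let z be a self-adjoint Hilbert–Schmidt operator on a complex Hilbert space H with z ≥ −ε·1. Then z²(1+z)^{-1} is a positive trace-class operator and Tr[z²(1+z)^{-1}] ≥ ‖z‖²_HS / (1 + ‖z‖_op) ≥ ‖z‖²_HS / (1 + ‖z‖_HS) ≥ (1/2) · min{‖z‖_HS, ‖z‖²_HS}, where ‖z‖_op denotes the operator norm and ‖z‖_HS the Hilbert–Schmidt norm. -/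
set_option synthInstance.maxHeartbeats 1000000
set_option maxHeartbeats 1000000

open scoped InnerProductSpace

/-!
Since `z` commutes with `(1 + z)⁻¹`, one has `z² (1 + z)⁻¹ = z* (1 + z)⁻¹ z`. Inversion reverses the
order on strictly positive elements, so `1 - ε ≤ 1 + z ≤ 1 + ‖z‖` gives, after conjugation by `z`,
`(1 + ‖z‖)⁻¹ z* z ≤ z² (1 + z)⁻¹ ≤ (1 - ε)⁻¹ z* z`. The upper bound makes the middle operator trace
class, and taking traces in the lower one gives the first inequality. The second is
`‖z‖ ≤ ‖z‖_HS`, which follows from the Parseval identity for `z* y`, and the third is elementary.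
-/

theorem half_min_self_sq_le_sq_div_one_add {𝕜 : Type*} [Field 𝕜] [LinearOrder 𝕜]
    [IsStrictOrderedRing 𝕜] {x : 𝕜} (hx : 0 ≤ x) :
    1 / 2 * min x (x ^ 2) ≤ x ^ 2 / (1 + x) := by
  rw [le_div_iff₀ (by positivity)]
  rcases le_total x 1 with hx1 | hx1
  · have hmin : min x (x ^ 2) ≤ x ^ 2 := min_le_right _ _
    nlinarith [sq_nonneg x]
  · have hmin : min x (x ^ 2) ≤ x := min_le_left _ _
    nlinarith

section RingInverse

theorem commute_ringInverse_right {M : Type*} [MonoidWithZero M] {a b : M} (h : Commute a b) :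
    Commute a (Ring.inverse b) := by
  by_cases hb : IsUnit b
  · lift b to Mˣ using hb
    rw [Ring.inverse_unit]
    exact h.units_inv_right
  · rw [Ring.inverse_non_unit b hb]
    exact Commute.zero_right a

theorem ringInverse_map {F G M : Type*} [GroupWithZero G] [MonoidWithZero M] [FunLike F G M]
    [MonoidWithZeroHomClass F G M] (f : F) (a : G) : Ring.inverse (f a) = f a⁻¹ := by
  rcases eq_or_ne a 0 with rfl | ha
  · rw [map_zero, inv_zero, map_zero, Ring.inverse_zero]
  · exact Ring.inverse_unit (Units.map (f : G →* M) (Units.mk0 a ha))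

theorem sq_mul_ringInverse_one_add {A : Type*} [Semiring A] [Star A] {z : A}
    (hz : IsSelfAdjoint z) :
    z ^ 2 * Ring.inverse (1 + z) = star z * Ring.inverse (1 + z) * z := by
  have hcomm : Commute z (Ring.inverse (1 + z)) :=
    commute_ringInverse_right ((Commute.one_right z).add_right (Commute.refl z))
  rw [hz.star_eq, sq, mul_assoc, mul_assoc, hcomm.eq]

end RingInverse

theorem mul_algebraMap_mul {R A : Type*} [CommSemiring R] [Semiring A] [Algebra R A]
    (r : R) (a b : A) : a * algebraMap R A r * b = r • (a * b) := by
  rw [← Algebra.commutes, mul_assoc, Algebra.smul_def]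

section CStarAlgebra

variable {A : Type*} [CStarAlgebra A] [PartialOrder A] [StarOrderedRing A] {a : A} {r : ℝ}

theorem inv_smul_le_star_left_conjugate_ringInverse (ha : IsStrictlyPositive a)
    (har : a ≤ algebraMap ℝ A r) (b : A) :
    r⁻¹ • (star b * b) ≤ star b * Ring.inverse a * b := by
  rw [← mul_algebraMap_mul, ← ringInverse_map]
  exact star_left_conjugate_le_conjugate (CStarAlgebra.ringInverse_le_ringInverse har ha) b

theorem star_left_conjugate_ringInverse_le_inv_smul (hr : 0 < r)
    (hra : algebraMap ℝ A r ≤ a) (b : A) :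
    star b * Ring.inverse a * b ≤ r⁻¹ • (star b * b) := by
  rw [← mul_algebraMap_mul, ← ringInverse_map]
  exact star_left_conjugate_le_conjugate
    (CStarAlgebra.ringInverse_le_ringInverse hra (isStrictlyPositive_algebraMap hr)) b

end CStarAlgebra

section HilbertBasis

variable {ι 𝕜 E F : Type*} [RCLike 𝕜]
  [NormedAddCommGroup E] [InnerProductSpace 𝕜 E] [NormedAddCommGroup F] [InnerProductSpace 𝕜 F]

theorem hasSum_norm_inner_sq (b : HilbertBasis ι 𝕜 E) (x : E) :
    HasSum (fun i ↦ ‖⟪b i, x⟫_𝕜‖ ^ 2) (‖x‖ ^ 2) := by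
  simpa [b.repr_apply_apply] using lp.hasSum_norm (p := 2) (by norm_num) (b.repr x)

variable [CompleteSpace E] [CompleteSpace F]

theorem norm_adjoint_apply_sq_le (b : HilbertBasis ι 𝕜 E) {T : E →L[𝕜] F}
    (hT : Summable fun i ↦ ‖T (b i)‖ ^ 2) (y : F) :
    ‖T.adjoint y‖ ^ 2 ≤ (∑' i, ‖T (b i)‖ ^ 2) * ‖y‖ ^ 2 := by
  refine hasSum_le (fun i ↦ ?_) (hasSum_norm_inner_sq b (T.adjoint y))
    (hT.hasSum.mul_right (‖y‖ ^ 2))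
  rw [T.adjoint_inner_right, ← mul_pow]
  gcongr
  exact norm_inner_le_norm _ _

theorem opNorm_le_sqrt_tsum_norm_apply_sq (b : HilbertBasis ι 𝕜 E) {T : E →L[𝕜] F}
    (hT : Summable fun i ↦ ‖T (b i)‖ ^ 2) :
    ‖T‖ ≤ √(∑' i, ‖T (b i)‖ ^ 2) := by
  rw [← ContinuousLinearMap.adjoint.norm_map T]
  refine ContinuousLinearMap.opNorm_le_bound _ (Real.sqrt_nonneg _) fun y ↦ ?_
  rw [← Real.sqrt_sq (norm_nonneg y), ← Real.sqrt_mul' _ (sq_nonneg ‖y‖)]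
  exact Real.le_sqrt_of_sq_le (norm_adjoint_apply_sq_le b hT y)

end HilbertBasis

section Trace

variable {H : Type*} [NormedAddCommGroup H] [InnerProductSpace ℂ H] [CompleteSpace H]
  {S T : H →L[ℂ] H}

theorem opDiag_nonneg (hT : 0 ≤ T) : 0 ≤ opDiag T := fun i ↦
  ((ContinuousLinearMap.nonneg_iff_isPositive T).1 hT).re_inner_nonneg_right (traceBasis H i)

theorem opDiag_sub (S T : H →L[ℂ] H) : opDiag (S - T) = opDiag S - opDiag T := by
  ext i
  simp [opDiag]

theorem opDiag_mono (h : S ≤ T) : opDiag S ≤ opDiag T := by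
  rw [← sub_nonneg, ← opDiag_sub]
  exact opDiag_nonneg (sub_nonneg.2 h)

theorem opDiag_smul (c : ℝ) (T : H →L[ℂ] H) : opDiag (c • T) = c • opDiag T := by
  ext i
  simp [opDiag, ← Complex.coe_smul]

theorem opDiag_star_mul_self (T : H →L[ℂ] H) :
    opDiag (star T * T) = fun i ↦ ‖T (traceBasis H i)‖ ^ 2 := by
  ext i
  rw [opDiag, ContinuousLinearMap.star_eq_adjoint, mul_apply_eq_comp,
    ContinuousLinearMap.adjoint_inner_right]
  exact inner_self_eq_norm_sq (𝕜 := ℂ) _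

theorem opTrace_nonneg (hT : 0 ≤ T) : 0 ≤ opTrace T :=
  tsum_nonneg (opDiag_nonneg hT)

theorem opTrace_smul (c : ℝ) (T : H →L[ℂ] H) : opTrace (c • T) = c * opTrace T := by
  rw [opTrace, opDiag_smul]
  exact tsum_mul_left

theorem opTrace_le_opTrace (h : S ≤ T) (hS : Summable (opDiag S)) (hT : Summable (opDiag T)) :
    opTrace S ≤ opTrace T :=
  hS.tsum_le_tsum (opDiag_mono h) hT

theorem IsPosTraceClass.of_le (hS : 0 ≤ S) (h : S ≤ T) (hT : IsPosTraceClass T) :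
    IsPosTraceClass S :=
  ⟨hS, hT.2.of_nonneg_of_le (opDiag_nonneg hS) (opDiag_mono h)⟩

theorem IsPosTraceClass.smul (hT : IsPosTraceClass T) {c : ℝ} (hc : 0 ≤ c) :
    IsPosTraceClass (c • T) :=
  ⟨smul_nonneg hc hT.1, opDiag_smul c T ▸ hT.2.const_smul c⟩

theorem IsHilbertSchmidt.isPosTraceClass_star_mul_self (hT : IsHilbertSchmidt T) :
    IsPosTraceClass (star T * T) :=
  ⟨star_mul_self_nonneg T, hT⟩

theorem hsNorm_nonneg (T : H →L[ℂ] H) : 0 ≤ hsNorm T :=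
  Real.sqrt_nonneg _

theorem hsNorm_sq (T : H →L[ℂ] H) : hsNorm T ^ 2 = opTrace (star T * T) :=
  Real.sq_sqrt (opTrace_nonneg (star_mul_self_nonneg T))

theorem IsHilbertSchmidt.opNorm_le_hsNorm (hT : IsHilbertSchmidt T) : ‖T‖ ≤ hsNorm T := by
  rw [IsHilbertSchmidt, opDiag_star_mul_self] at hT
  rw [hsNorm, opTrace, opDiag_star_mul_self]
  exact opNorm_le_sqrt_tsum_norm_apply_sq (traceBasis H) hT

end Trace

/-- For `z` self-adjoint Hilbert–Schmidt with `z ≥ −ε·1`, `ε ∈ (0,1)`, the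
operator `z²(1+z)⁻¹` is positive trace class and
`Tr[z²(1+z)⁻¹] ≥ ‖z‖²_HS/(1+‖z‖_op) ≥ ‖z‖²_HS/(1+‖z‖_HS) ≥ (1/2)·min{‖z‖_HS, ‖z‖²_HS}`. -/
theorem coercivity_trace_bound {H : Type*} [NormedAddCommGroup H] [InnerProductSpace ℂ H]
    [CompleteSpace H] (ε : ℝ) (hε : ε ∈ Set.Ioo (0 : ℝ) 1) (z : H →L[ℂ] H)
    (hz : IsSelfAdjoint z) (hzHS : IsHilbertSchmidt z)
    (hzb : -(ε • (1 : H →L[ℂ] H)) ≤ z) :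
    IsPosTraceClass (z ^ 2 * Ring.inverse (1 + z)) ∧
    hsNorm z ^ 2 / (1 + ‖z‖) ≤ opTrace (z ^ 2 * Ring.inverse (1 + z)) ∧
    hsNorm z ^ 2 / (1 + hsNorm z) ≤ hsNorm z ^ 2 / (1 + ‖z‖) ∧
    (1 / 2) * min (hsNorm z) (hsNorm z ^ 2) ≤ hsNorm z ^ 2 / (1 + hsNorm z) := by
  have hε1 : 0 < 1 - ε := sub_pos.2 hε.2
  have one_add_ge : algebraMap ℝ (H →L[ℂ] H) (1 - ε) ≤ 1 + z := by
    rw [map_sub, map_one, Algebra.algebraMap_eq_smul_one, sub_eq_add_neg]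
    gcongr
  have one_add_le : 1 + z ≤ algebraMap ℝ (H →L[ℂ] H) (1 + ‖z‖) := by
    rw [map_add, map_one]
    gcongr
    exact hz.le_algebraMap_norm_self
  have one_add_pos : IsStrictlyPositive (1 + z) :=
    (isStrictlyPositive_algebraMap hε1).of_le one_add_ge
  have hzz := hzHS.isPosTraceClass_star_mul_self
  have lower := inv_smul_le_star_left_conjugate_ringInverse one_add_pos one_add_le z
  have upper := star_left_conjugate_ringInverse_le_inv_smul hε1 one_add_ge z
  rw [← sq_mul_ringInverse_one_add hz] at lower upper
  have hlower : IsPosTraceClass ((1 + ‖z‖)⁻¹ • (star z * z)) := hzz.smul (by positivity)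
  have htc : IsPosTraceClass (z ^ 2 * Ring.inverse (1 + z)) :=
    .of_le (hlower.1.trans lower) upper (hzz.smul (inv_nonneg.2 hε1.le))
  refine ⟨htc, ?_, ?_, half_min_self_sq_le_sq_div_one_add (hsNorm_nonneg z)⟩
  · rw [hsNorm_sq, div_eq_inv_mul, ← opTrace_smul]
    exact opTrace_le_opTrace lower hlower.2 htc.2
  · gcongr
    exact hzHS.opNorm_le_hsNorm
end
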